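/- Let $\alpha > 0$, let $F : \mathbb{R} \to \mathbb{R}$ be an even Schwartz function with $F(t) \ne 0$ for all $t \in [-1, 1]$, and let $\sigma$ be a positive Borel measure on $(0, \infty)$ that is tempered, i.e. $\sigma((0, r])$ is finite for every $r > 0$ and there exist constants $C, N, M > 0$ with $\sigma((0, r]) \le C r^N$ for all $r \ge M$. Then $$\lim_{\varepsilon \to 0^+} \frac{\sigma((0, \varepsilon])}{\varepsilon^{\alpha}} = 0 \quad \Longleftrightarrow \quad \lim_{s \to +\infty} s^{\alpha} \int_{(0,\infty)} F(s\lambda)^2 \, d\sigma(\lambda) = 0.$$ -/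

import Mathlib

open MeasureTheory Filter

/- Put `f = F ^ 2` and `G r = σ (0, r]`. A lower bound `c ≤ f` on `(0, 1]` gives
`c * G (1 / s) ≤ ∫ f (s * l) ∂σ`. Conversely, if `G r ≤ η * r ^ α` near `0`, then the polynomial
growth of `G` at infinity upgrades this to `G r ≤ η * r ^ α + D * r ^ β` for all `r > 0`, with an
exponent `β > α` below the decay rate `p` of `f`. Dominating `f (s * l)` by the sum of the step
functions of height `K * (2 ^ n) ^ (-p)` on `(0, 2 ^ (n + 1) / s]` and summing geometric series,
one gets `∫ f (s * l) ∂σ ≤ C₁ * η * s ^ (-α) + C₂ * D * s ^ (-β)`. Here `C₁` does not depend on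
`η`, and the second term is negligible against `s ^ (-α)`. -/

open Set Topology Asymptotics

section Growth

variable {σ : Measure ℝ} {α β η : ℝ}

lemma rpow_isBigO_rpow_atTop_of_le (h : α ≤ β) :
    (fun r : ℝ => r ^ α) =O[atTop] fun r => r ^ β := by
  refine IsBigO.of_bound' ?_
  filter_upwards [eventually_ge_atTop 1] with r hr
  have hr0 : 0 ≤ r := zero_le_one.trans hr
  rw [Real.norm_of_nonneg (Real.rpow_nonneg hr0 α), Real.norm_of_nonneg (Real.rpow_nonneg hr0 β)]
  exact Real.rpow_le_rpow_of_exponent_le hr h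

lemma isBigO_measureReal_Ioc_of_le_ofReal {C N M : ℝ} (hC : 0 ≤ C)
    (h : ∀ r, M ≤ r → σ (Ioc 0 r) ≤ ENNReal.ofReal (C * r ^ N)) :
    (fun r => σ.real (Ioc 0 r)) =O[atTop] fun r => r ^ N := by
  refine IsBigO.of_bound C ?_
  filter_upwards [eventually_ge_atTop M, eventually_ge_atTop 0] with r hMr hr
  rw [Real.norm_of_nonneg measureReal_nonneg, Real.norm_of_nonneg (Real.rpow_nonneg hr N)]
  exact ENNReal.toReal_le_of_le_ofReal (by positivity) (h r hMr)

lemma exists_measureReal_Ioc_le_mul_rpow (hβ : 0 ≤ β)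
    (hfin : ∀ r, 0 < r → σ (Ioc 0 r) < ⊤)
    (hgrowth : (fun r => σ.real (Ioc 0 r)) =O[atTop] fun r => r ^ β) {δ : ℝ} (hδ : 0 < δ) :
    ∃ D, 0 ≤ D ∧ ∀ r, δ ≤ r → σ.real (Ioc 0 r) ≤ D * r ^ β := by
  obtain ⟨C, hC, hbound⟩ := hgrowth.exists_pos
  obtain ⟨M, hM⟩ := eventually_atTop.1 hbound.bound
  set R := max M δ
  have hR : 0 < R := hδ.trans_le (le_max_right M δ)
  refine ⟨max C (σ.real (Ioc 0 R) / δ ^ β), le_max_of_le_left hC.le, fun r hr => ?_⟩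
  have hr0 : 0 < r := hδ.trans_le hr
  rcases le_total R r with hRr | hrR
  · calc σ.real (Ioc 0 r) ≤ C * r ^ β := by
          simpa only [Real.norm_of_nonneg measureReal_nonneg,
            Real.norm_of_nonneg (Real.rpow_nonneg hr0.le β)] using
            hM r ((le_max_left M δ).trans hRr)
      _ ≤ _ := by gcongr; exact le_max_left _ _
  · calc σ.real (Ioc 0 r) ≤ σ.real (Ioc 0 R) :=
          measureReal_mono (Ioc_subset_Ioc_right hrR) (hfin R hR).ne
      _ = σ.real (Ioc 0 R) / δ ^ β * δ ^ β := by field_simp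
      _ ≤ _ := by gcongr; exact le_max_right _ _

lemma exists_measureReal_Ioc_le_add_mul_rpow (hβ : 0 ≤ β) (hη : 0 ≤ η)
    (hfin : ∀ r, 0 < r → σ (Ioc 0 r) < ⊤)
    (hgrowth : (fun r => σ.real (Ioc 0 r)) =O[atTop] fun r => r ^ β)
    (hzero : ∀ᶠ r in 𝓝[>] 0, σ.real (Ioc 0 r) ≤ η * r ^ α) :
    ∃ D, 0 ≤ D ∧ ∀ r, 0 < r → σ.real (Ioc 0 r) ≤ η * r ^ α + D * r ^ β := by
  obtain ⟨δ, hδ : 0 < δ, hnear⟩ := mem_nhdsGT_iff_exists_Ioo_subset.1 hzero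
  obtain ⟨D, hD, hfar⟩ := exists_measureReal_Ioc_le_mul_rpow hβ hfin hgrowth hδ
  refine ⟨D, hD, fun r hr => ?_⟩
  rcases lt_or_ge r δ with hlt | hge
  · exact (hnear ⟨hr, hlt⟩).trans (le_add_of_nonneg_right (by positivity))
  · exact (hfar r hge).trans (le_add_of_nonneg_left (by positivity))

end Growth

section Decay

lemma exists_le_two_pow_succ_and_one_add_rpow_neg_le {t p : ℝ} (ht : 0 ≤ t) (hp : 0 ≤ p) :
    ∃ n : ℕ, t ≤ 2 ^ (n + 1) ∧ (1 + t) ^ (-p) ≤ ((2 : ℝ) ^ n) ^ (-p) := by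
  obtain ⟨n, hle, hlt⟩ := exists_nat_pow_near (le_add_of_nonneg_right ht) one_lt_two
  exact ⟨n, by linarith, Real.rpow_le_rpow_of_nonpos (by positivity) hle (neg_nonpos.2 hp)⟩

lemma hasSum_two_pow_rpow_mul_rpow {s p γ : ℝ} (hs : 0 < s) (hγ : γ < p) :
    HasSum (fun n : ℕ => ((2 : ℝ) ^ n) ^ (-p) * (2 ^ (n + 1) / s) ^ γ)
      ((2 / s) ^ γ / (1 - 2 ^ (γ - p))) := by
  have hratio : (2 : ℝ) ^ (γ - p) < 1 :=
    Real.rpow_lt_one_of_one_lt_of_neg one_lt_two (sub_neg.2 hγ)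
  rw [div_eq_mul_inv]
  convert! (hasSum_geometric_of_lt_one (by positivity) hratio).mul_left ((2 / s) ^ γ) using 1
  ext n
  rw [pow_succ, mul_div_assoc, Real.mul_rpow (by positivity) (by positivity), ← mul_assoc,
    ← Real.rpow_add (by positivity), Real.rpow_pow_comm zero_le_two, mul_comm, sub_eq_neg_add]

variable {σ : Measure ℝ} {f : ℝ → ℝ} {K p : ℝ}

lemma setLIntegral_comp_mul_left_le_tsum (hp : 0 ≤ p) (hK : 0 ≤ K)
    (hdecay : ∀ t, 0 < t → f t ≤ K * (1 + t) ^ (-p)) {s : ℝ} (hs : 0 < s) :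
    ∫⁻ l in Ioi 0, ENNReal.ofReal (f (s * l)) ∂σ ≤
      ∑' n : ℕ, ENNReal.ofReal (K * ((2 : ℝ) ^ n) ^ (-p)) * σ (Ioc 0 (2 ^ (n + 1) / s)) := by
  set w : ℕ → ENNReal := fun n => ENNReal.ofReal (K * ((2 : ℝ) ^ n) ^ (-p))
  set I : ℕ → Set ℝ := fun n => Ioc 0 (2 ^ (n + 1) / s)
  have hpointwise : ∀ l ∈ Ioi (0 : ℝ),
      ENNReal.ofReal (f (s * l)) ≤ ∑' n, (I n).indicator (fun _ => w n) l := by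
    intro l (hl : 0 < l)
    obtain ⟨n, hn, hweight⟩ :=
      exists_le_two_pow_succ_and_one_add_rpow_neg_le (mul_pos hs hl).le hp
    have hmem : l ∈ I n := ⟨hl, (le_div_iff₀' hs).2 hn⟩
    calc ENNReal.ofReal (f (s * l)) ≤ w n :=
          ENNReal.ofReal_le_ofReal ((hdecay _ (mul_pos hs hl)).trans (by gcongr))
      _ = (I n).indicator (fun _ => w n) l := (indicator_of_mem hmem (fun _ => w n)).symm
      _ ≤ _ := ENNReal.le_tsum n
  calc ∫⁻ l in Ioi 0, ENNReal.ofReal (f (s * l)) ∂σ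
      ≤ ∫⁻ l in Ioi 0, ∑' n, (I n).indicator (fun _ => w n) l ∂σ :=
        setLIntegral_mono' measurableSet_Ioi hpointwise
    _ ≤ ∫⁻ l, ∑' n, (I n).indicator (fun _ => w n) l ∂σ := setLIntegral_le_lintegral _ _
    _ = ∑' n, w n * σ (I n) := by
        rw [lintegral_tsum fun n => (measurable_const.indicator measurableSet_Ioc).aemeasurable]
        simp only [I, lintegral_indicator_const measurableSet_Ioc]

lemma setLIntegral_comp_mul_left_le (hp : 0 ≤ p) (hK : 0 ≤ K)
    (hdecay : ∀ t, 0 < t → f t ≤ K * (1 + t) ^ (-p))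
    (hfin : ∀ r, 0 < r → σ (Ioc 0 r) < ⊤) {α β A B : ℝ} (hα : α < p) (hβ : β < p)
    (hσ : ∀ r, 0 < r → σ.real (Ioc 0 r) ≤ A * r ^ α + B * r ^ β) {s : ℝ} (hs : 0 < s) :
    ∫⁻ l in Ioi 0, ENNReal.ofReal (f (s * l)) ∂σ ≤ ENNReal.ofReal
      (K * (A * ((2 / s) ^ α / (1 - 2 ^ (α - p))) + B * ((2 / s) ^ β / (1 - 2 ^ (β - p))))) := by
  set w : ℕ → ℝ := fun n => ((2 : ℝ) ^ n) ^ (-p)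
  set r : ℕ → ℝ := fun n => 2 ^ (n + 1) / s
  have hw : ∀ n, 0 ≤ w n := fun n => by positivity
  have hr : ∀ n, 0 < r n := fun n => by positivity
  have hsum : HasSum (fun n => K * (A * (w n * r n ^ α) + B * (w n * r n ^ β)))
      (K * (A * ((2 / s) ^ α / (1 - 2 ^ (α - p))) + B * ((2 / s) ^ β / (1 - 2 ^ (β - p))))) :=
    (((hasSum_two_pow_rpow_mul_rpow hs hα).mul_left A).add
      ((hasSum_two_pow_rpow_mul_rpow hs hβ).mul_left B)).mul_left K
  have hterm : ∀ n, K * w n * σ.real (Ioc 0 (r n)) ≤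
      K * (A * (w n * r n ^ α) + B * (w n * r n ^ β)) := fun n =>
    calc K * w n * σ.real (Ioc 0 (r n)) ≤ K * w n * (A * r n ^ α + B * r n ^ β) :=
          mul_le_mul_of_nonneg_left (hσ _ (hr n)) (mul_nonneg hK (hw n))
      _ = _ := by ring
  have hnonneg : ∀ n, 0 ≤ K * w n * σ.real (Ioc 0 (r n)) := fun n =>
    mul_nonneg (mul_nonneg hK (hw n)) measureReal_nonneg
  calc ∫⁻ l in Ioi 0, ENNReal.ofReal (f (s * l)) ∂σ
      ≤ ∑' n, ENNReal.ofReal (K * w n) * σ (Ioc 0 (r n)) :=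
        setLIntegral_comp_mul_left_le_tsum hp hK hdecay hs
    _ = ∑' n, ENNReal.ofReal (K * w n * σ.real (Ioc 0 (r n))) := by
        simp_rw [ENNReal.ofReal_mul (mul_nonneg hK (hw _)),
          ofReal_measureReal (hfin _ (hr _)).ne]
    _ ≤ ∑' n, ENNReal.ofReal (K * (A * (w n * r n ^ α) + B * (w n * r n ^ β))) :=
        ENNReal.tsum_le_tsum fun n => ENNReal.ofReal_le_ofReal (hterm n)
    _ = _ := by
        rw [← ENNReal.ofReal_tsum_of_nonneg (fun n => (hnonneg n).trans (hterm n)) hsum.summable,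
          hsum.tsum_eq]

lemma integrableOn_comp_mul_left (hf : Measurable f) (hf0 : ∀ t, 0 < t → 0 ≤ f t) {β : ℝ}
    (hβ : 0 ≤ β) (hβp : β < p) (hK : 0 ≤ K) (hdecay : ∀ t, 0 < t → f t ≤ K * (1 + t) ^ (-p))
    (hfin : ∀ r, 0 < r → σ (Ioc 0 r) < ⊤)
    (hgrowth : (fun r => σ.real (Ioc 0 r)) =O[atTop] fun r => r ^ β) {s : ℝ} (hs : 0 < s) :
    IntegrableOn (fun l => f (s * l)) (Ioi 0) σ := by
  have hp : 0 < p := hβ.trans_lt hβp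
  have hzero : ∀ᶠ r in 𝓝[>] (0 : ℝ), σ.real (Ioc 0 r) ≤ σ.real (Ioc 0 1) * r ^ (0 : ℝ) := by
    filter_upwards [Ioo_mem_nhdsGT one_pos] with r hr
    rw [Real.rpow_zero, mul_one]
    exact measureReal_mono (Ioc_subset_Ioc_right hr.2.le) (hfin 1 one_pos).ne
  obtain ⟨D, -, hσ⟩ :=
    exists_measureReal_Ioc_le_add_mul_rpow hβ measureReal_nonneg hfin hgrowth hzero
  refine ⟨(hf.comp (measurable_const_mul s)).aestronglyMeasurable, ?_⟩
  rw [hasFiniteIntegral_iff_ofReal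
    (ae_restrict_of_forall_mem measurableSet_Ioi fun l hl => hf0 _ (mul_pos hs hl))]
  exact (setLIntegral_comp_mul_left_le hp.le hK hdecay hfin hp hβp hσ hs).trans_lt
    ENNReal.ofReal_lt_top

lemma rpow_mul_setIntegral_comp_mul_left_le (hf : Measurable f) (hf0 : ∀ t, 0 < t → 0 ≤ f t)
    (hp : 0 ≤ p) (hK : 0 ≤ K) (hdecay : ∀ t, 0 < t → f t ≤ K * (1 + t) ^ (-p))
    (hfin : ∀ r, 0 < r → σ (Ioc 0 r) < ⊤) {α β A B : ℝ} (hα : α < p) (hβ : β < p)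
    (hA : 0 ≤ A) (hB : 0 ≤ B)
    (hσ : ∀ r, 0 < r → σ.real (Ioc 0 r) ≤ A * r ^ α + B * r ^ β) {s : ℝ} (hs : 0 < s) :
    s ^ α * ∫ l in Ioi 0, f (s * l) ∂σ ≤
      K * 2 ^ α / (1 - 2 ^ (α - p)) * A +
        K * B * 2 ^ β / (1 - 2 ^ (β - p)) * s ^ (-(β - α)) := by
  have hgeom : ∀ γ, γ < p → (0 : ℝ) < 1 - 2 ^ (γ - p) := fun γ hγ =>
    sub_pos.2 (Real.rpow_lt_one_of_one_lt_of_neg one_lt_two (sub_neg.2 hγ))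
  have hgα := hgeom α hα
  have hgβ := hgeom β hβ
  have hintegral : ∫ l in Ioi 0, f (s * l) ∂σ ≤
      K * (A * ((2 / s) ^ α / (1 - 2 ^ (α - p))) + B * ((2 / s) ^ β / (1 - 2 ^ (β - p)))) := by
    rw [integral_eq_lintegral_of_nonneg_ae
      (ae_restrict_of_forall_mem measurableSet_Ioi fun l hl => hf0 _ (mul_pos hs hl))
      (hf.comp (measurable_const_mul s)).aestronglyMeasurable]
    exact ENNReal.toReal_le_of_le_ofReal (by positivity)
      (setLIntegral_comp_mul_left_le hp hK hdecay hfin hα hβ hσ hs)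
  refine (mul_le_mul_of_nonneg_left hintegral (by positivity)).trans_eq ?_
  rw [Real.div_rpow zero_le_two hs.le, Real.div_rpow zero_le_two hs.le, neg_sub,
    Real.rpow_sub hs]
  field_simp

end Decay

section Schwartz

lemma exists_schwartzMap_norm_le_mul_one_add_norm_rpow {E G : Type*}
    [NormedAddCommGroup E] [NormedSpace ℝ E] [NormedAddCommGroup G] [NormedSpace ℝ G]
    (F : SchwartzMap E G) (p : ℝ) :
    ∃ K, ∀ x, ‖F x‖ ≤ K * (1 + ‖x‖) ^ (-p) := by
  obtain ⟨k, hk⟩ := exists_nat_ge p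
  refine ⟨2 ^ k * (Finset.Iic (k, 0)).sup (fun m => SchwartzMap.seminorm ℝ m.1 m.2) F,
    fun x => ?_⟩
  have hone : 1 ≤ 1 + ‖x‖ := le_add_of_nonneg_right (norm_nonneg x)
  have hseminorm := F.one_add_le_sup_seminorm_apply (𝕜 := ℝ) (m := (k, 0)) le_rfl le_rfl x
  rw [norm_iteratedFDeriv_zero] at hseminorm
  rw [Real.rpow_neg (by positivity), ← div_eq_mul_inv, le_div_iff₀' (by positivity)]
  calc (1 + ‖x‖) ^ p * ‖F x‖ ≤ (1 + ‖x‖) ^ k * ‖F x‖ := by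
        gcongr
        exact (Real.rpow_le_rpow_of_exponent_le hone hk).trans_eq (Real.rpow_natCast _ k)
    _ ≤ _ := hseminorm

lemma exists_forall_pos_schwartzMap_sq_le (F : SchwartzMap ℝ ℝ) (p : ℝ) :
    ∃ K, ∀ t, 0 < t → F t ^ 2 ≤ K * (1 + t) ^ (-p) := by
  obtain ⟨K, hK⟩ := exists_schwartzMap_norm_le_mul_one_add_norm_rpow F (p / 2)
  refine ⟨K ^ 2, fun t ht => ?_⟩
  have habs : |F t| ≤ K * (1 + t) ^ (-(p / 2)) := by
    simpa only [Real.norm_eq_abs, abs_of_pos ht] using hK t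
  calc F t ^ 2 ≤ (K * (1 + t) ^ (-(p / 2))) ^ 2 := sq_le_sq' (abs_le.1 habs).1 (abs_le.1 habs).2
    _ = K ^ 2 * (1 + t) ^ (-p) := by
        rw [mul_pow, ← Real.rpow_mul_natCast (by positivity)]
        congr 2
        push_cast
        ring

end Schwartz

section Tauberian

variable {σ : Measure ℝ} {f : ℝ → ℝ} {α β p K : ℝ}

lemma tendsto_rpow_mul_setIntegral_of_tendsto_measureReal_Ioc_div_rpow
    (hf : Measurable f) (hf0 : ∀ t, 0 < t → 0 ≤ f t) (hβ : 0 ≤ β) (hαβ : α < β) (hβp : β < p)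
    (hK : 0 ≤ K) (hdecay : ∀ t, 0 < t → f t ≤ K * (1 + t) ^ (-p))
    (hfin : ∀ r, 0 < r → σ (Ioc 0 r) < ⊤)
    (hgrowth : (fun r => σ.real (Ioc 0 r)) =O[atTop] fun r => r ^ β)
    (hσ : Tendsto (fun ε => σ.real (Ioc 0 ε) / ε ^ α) (𝓝[>] 0) (𝓝 0)) :
    Tendsto (fun s => s ^ α * ∫ l in Ioi 0, f (s * l) ∂σ) atTop (𝓝 0) := by
  have hnonneg : ∀ᶠ s in atTop, 0 ≤ s ^ α * ∫ l in Ioi 0, f (s * l) ∂σ := by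
    filter_upwards [eventually_gt_atTop 0] with s hs
    exact mul_nonneg (by positivity)
      (setIntegral_nonneg measurableSet_Ioi fun l hl => hf0 _ (mul_pos hs hl))
  refine tendsto_order.2 ⟨fun a ha => hnonneg.mono fun s hs => ha.trans_le hs, fun b hb => ?_⟩
  obtain ⟨η, hη, hηb⟩ := exists_pos_mul_lt hb (K * 2 ^ α / (1 - 2 ^ (α - p)))
  have hzero : ∀ᶠ r in 𝓝[>] 0, σ.real (Ioc 0 r) ≤ η * r ^ α := by
    filter_upwards [hσ.eventually_le_const hη, self_mem_nhdsWithin] with r hr (hr0 : 0 < r)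
    exact (div_le_iff₀ (by positivity)).1 hr
  obtain ⟨D, hD, hσle⟩ := exists_measureReal_Ioc_le_add_mul_rpow hβ hη.le hfin hgrowth hzero
  have hbound : Tendsto (fun s : ℝ => K * 2 ^ α / (1 - 2 ^ (α - p)) * η +
      K * D * 2 ^ β / (1 - 2 ^ (β - p)) * s ^ (-(β - α))) atTop
      (𝓝 (K * 2 ^ α / (1 - 2 ^ (α - p)) * η)) := by
    simpa only [mul_zero, add_zero] using
      ((tendsto_rpow_neg_atTop (sub_pos.2 hαβ)).const_mul _).const_add _
  filter_upwards [hbound.eventually_lt_const hηb, eventually_gt_atTop 0] with s hsb hs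
  exact (rpow_mul_setIntegral_comp_mul_left_le hf hf0 (hβ.trans hβp.le) hK hdecay hfin
    (hαβ.trans hβp) hβp hη.le hD hσle hs).trans_lt hsb

lemma mul_measureReal_Ioc_inv_le_setIntegral {c s : ℝ} (hf0 : ∀ t, 0 < t → 0 ≤ f t)
    (hlow : ∀ t ∈ Ioc 0 1, c ≤ f t) (hfin : ∀ r, 0 < r → σ (Ioc 0 r) < ⊤) (hs : 0 < s)
    (hint : IntegrableOn (fun l => f (s * l)) (Ioi 0) σ) :
    c * σ.real (Ioc 0 s⁻¹) ≤ ∫ l in Ioi 0, f (s * l) ∂σ :=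
  calc c * σ.real (Ioc 0 s⁻¹) ≤ ∫ l in Ioc 0 s⁻¹, f (s * l) ∂σ := by
        refine setIntegral_ge_of_const_le_real measurableSet_Ioc (hfin _ (inv_pos.2 hs)).ne
          (fun l hl => hlow _ ⟨mul_pos hs hl.1, ?_⟩) (hint.mono_set Ioc_subset_Ioi_self)
        rw [← mul_inv_cancel₀ hs.ne']
        exact mul_le_mul_of_nonneg_left hl.2 hs.le
    _ ≤ ∫ l in Ioi 0, f (s * l) ∂σ :=
        setIntegral_mono_set hint
          (ae_restrict_of_forall_mem measurableSet_Ioi fun l hl => hf0 _ (mul_pos hs hl))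
          Ioc_subset_Ioi_self.eventuallyLE

lemma tendsto_measureReal_Ioc_div_rpow_of_tendsto_rpow_mul_setIntegral
    (hf0 : ∀ t, 0 < t → 0 ≤ f t) {c : ℝ} (hc : 0 < c) (hlow : ∀ t ∈ Ioc 0 1, c ≤ f t)
    (hfin : ∀ r, 0 < r → σ (Ioc 0 r) < ⊤)
    (hint : ∀ s, 0 < s → IntegrableOn (fun l => f (s * l)) (Ioi 0) σ)
    (h : Tendsto (fun s => s ^ α * ∫ l in Ioi 0, f (s * l) ∂σ) atTop (𝓝 0)) :
    Tendsto (fun ε => σ.real (Ioc 0 ε) / ε ^ α) (𝓝[>] 0) (𝓝 0) := by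
  have hupper : Tendsto (fun ε : ℝ => c⁻¹ * (ε⁻¹ ^ α * ∫ l in Ioi 0, f (ε⁻¹ * l) ∂σ))
      (𝓝[>] 0) (𝓝 0) := by
    simpa only [mul_zero, Function.comp_def] using
      (h.comp tendsto_inv_nhdsGT_zero).const_mul c⁻¹
  refine tendsto_of_tendsto_of_tendsto_of_le_of_le' tendsto_const_nhds hupper ?_ ?_
  · filter_upwards [self_mem_nhdsWithin] with ε (hε : 0 < ε)
    positivity
  · filter_upwards [self_mem_nhdsWithin] with ε (hε : 0 < ε)
    have hmass : c * σ.real (Ioc 0 ε) ≤ ∫ l in Ioi 0, f (ε⁻¹ * l) ∂σ := by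
      simpa only [inv_inv] using mul_measureReal_Ioc_inv_le_setIntegral hf0 hlow hfin
        (inv_pos.2 hε) (hint _ (inv_pos.2 hε))
    calc σ.real (Ioc 0 ε) / ε ^ α = c⁻¹ * (ε⁻¹ ^ α * (c * σ.real (Ioc 0 ε))) := by
          rw [Real.inv_rpow hε.le]
          field_simp
      _ ≤ _ := by gcongr

theorem stmt10_general {N : ℝ} (hN : 0 ≤ N) (hNp : N < p) (hαp : α < p)
    (hf : Measurable f) (hf0 : ∀ t, 0 < t → 0 ≤ f t) (hlow : ∃ c > 0, ∀ t ∈ Ioc 0 1, c ≤ f t)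
    (hdecay : ∃ K, ∀ t, 0 < t → f t ≤ K * (1 + t) ^ (-p))
    (hfin : ∀ r, 0 < r → σ (Ioc 0 r) < ⊤)
    (hgrowth : (fun r => σ.real (Ioc 0 r)) =O[atTop] fun r => r ^ N) :
    Tendsto (fun ε => σ.real (Ioc 0 ε) / ε ^ α) (𝓝[>] 0) (𝓝 0) ↔
      Tendsto (fun s => s ^ α * ∫ l in Ioi 0, f (s * l) ∂σ) atTop (𝓝 0) := by
  obtain ⟨c, hc, hlow⟩ := hlow
  obtain ⟨K, hdecay⟩ := hdecay
  have hK : 0 ≤ K :=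
    nonneg_of_mul_nonneg_left ((hf0 1 one_pos).trans (hdecay 1 one_pos)) (by positivity)
  obtain ⟨β, hβ, hβp⟩ := exists_between (max_lt hNp hαp)
  obtain ⟨hNβ, hαβ⟩ := max_lt_iff.1 hβ
  have hgrowthβ := hgrowth.trans (rpow_isBigO_rpow_atTop_of_le hNβ.le)
  exact ⟨tendsto_rpow_mul_setIntegral_of_tendsto_measureReal_Ioc_div_rpow hf hf0
      (hN.trans hNβ.le) hαβ hβp hK hdecay hfin hgrowthβ,
    tendsto_measureReal_Ioc_div_rpow_of_tendsto_rpow_mul_setIntegral hf0 hc hlow hfin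
      fun s hs => integrableOn_comp_mul_left hf hf0 hN hNp hK hdecay hfin hgrowth hs⟩

end Tauberian

/-- Let `α > 0`, `F` an even Schwartz function on `ℝ` not vanishing on
`[-1,1]`, and `σ` a tempered positive Borel measure on `(0,∞)` (finite on bounded sets,
with `σ((0,r]) ≤ C rᴺ` for large `r`). Then `σ((0,ε])/ε^α → 0` as `ε → 0⁺` if and only if
`s^α ∫ F(sλ)² dσ(λ) → 0` as `s → +∞`. -/
theorem stmt10 (α : ℝ) (hα : 0 < α)
    (F : SchwartzMap ℝ ℝ) (hFeven : ∀ t : ℝ, F (-t) = F t)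
    (hFne : ∀ t ∈ Set.Icc (-1 : ℝ) 1, F t ≠ 0)
    (σ : Measure ℝ) (hσsupp : σ (Set.Iic 0) = 0)
    (hσfin : ∀ r : ℝ, 0 < r → σ (Set.Ioc 0 r) < ⊤)
    (hσtemp : ∃ C N M : ℝ, 0 < C ∧ 0 < N ∧ 0 < M ∧
      ∀ r : ℝ, M ≤ r → σ (Set.Ioc 0 r) ≤ ENNReal.ofReal (C * r ^ N)) :
    Tendsto (fun ε : ℝ => (σ (Set.Ioc 0 ε)).toReal / ε ^ α)
        (nhdsWithin 0 (Set.Ioi 0)) (nhds 0) ↔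
      Tendsto (fun s : ℝ => s ^ α * ∫ l in Set.Ioi (0 : ℝ), (F (s * l)) ^ 2 ∂σ)
        atTop (nhds 0) := by
  obtain ⟨C, N, M, hC, hN, -, hσ⟩ := hσtemp
  obtain ⟨c, hc, hlow⟩ := isCompact_Icc.exists_forall_le' (F.continuous.pow 2).continuousOn
    fun t ht => sq_pos_of_ne_zero (hFne t ht)
  exact stmt10_general hN.le ((le_max_left N α).trans_lt (lt_add_one _))
    ((le_max_right N α).trans_lt (lt_add_one _)) (F.continuous.pow 2).measurable
    (fun t _ => sq_nonneg (F t)) ⟨c, hc, fun t ht => hlow t ⟨by linarith [ht.1], ht.2⟩⟩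
    (exists_forall_pos_schwartzMap_sq_le F _) hσfin (isBigO_measureReal_Ioc_of_le_ofReal hC.le hσ)
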